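/- arXiv:2510.22122 — 5 statements merged into one kernel-verified Lean document; each statement's English description precedes it below -/
import Mathlib

section
/- Let a < b be real numbers and let f : ℝ → ℝ be twice continuously differentiable on [a,b]. Then for every real number d with 0 < d ≤ (b−a)/2 one has sup_{x∈[a,b]} |f′(x)| ≤ (2/d)·sup_{x∈[a,b]} |f(x)| + (d/2)·sup_{x∈[a,b]} |f″(x)|. -/
/-!
For `x ∈ [a, b]`, the condition `d ≤ (b - a) / 2` guarantees that one of `x + d`, `x - d` lies in
`[a, b]`; write it as `x + s * d` with `s = ±1`. Taylor's formula at `x` with second-order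
remainder (`taylor_bound`) gives `d |f' x| ≤ |f (x + s * d)| + |f x| + (d ^ 2 / 2) sup |f''|`;
dividing by `d` and taking the supremum over `x` concludes.
-/

open Set

/-- Second-order Taylor bound from `x` in the direction `s = ±1`, for derivatives taken within
`[a, b]`. It follows by comparing `t ↦ f (x + s * t) - f x - s * t * f' x` with `M * t ^ 2 / 2`,
since the mean value inequality for `f'` bounds the derivative of the former by `M * t`. -/
lemma taylor_bound {a b d x s M : ℝ} {f f' f'' : ℝ → ℝ}
    (hf' : ∀ x ∈ Icc a b, HasDerivWithinAt f (f' x) (Icc a b) x)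
    (hf'' : ∀ x ∈ Icc a b, HasDerivWithinAt f' (f'' x) (Icc a b) x)
    (hM : ∀ x ∈ Icc a b, |f'' x| ≤ M) (hd : 0 ≤ d) (hs : |s| = 1)
    (hmem : ∀ t ∈ Icc 0 d, x + s * t ∈ Icc a b) :
    |f (x + s * d) - f x - s * d * f' x| ≤ M * d ^ 2 / 2 := by
  have hx : x ∈ Icc a b := by simpa using hmem 0 ⟨le_rfl, hd⟩
  have hg : ∀ t ∈ Icc 0 d, HasDerivWithinAt (fun t => f (x + s * t) - f x - s * t * f' x)
      (f' (x + s * t) * s - s * f' x) (Icc 0 d) t := by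
    intro t ht
    have hlin : HasDerivWithinAt (fun t : ℝ => s * t) s (Icc 0 d) t := by
      simpa using (hasDerivWithinAt_id t (Icc 0 d)).const_mul s
    exact (((hf' _ (hmem t ht)).comp t (hlin.const_add x) hmem).sub_const (f x)).sub
      (hlin.mul_const (f' x))
  have hB : ∀ t : ℝ, HasDerivAt (fun t : ℝ => M * t ^ 2 / 2) (M * t) t := by
    intro t
    have h := ((hasDerivAt_pow 2 t).const_mul M).div_const 2
    have hval : M * (((2 : ℕ) : ℝ) * t ^ (2 - 1)) / 2 = M * t := by
      norm_num
      ring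
    rwa [hval] at h
  have key := image_norm_le_of_norm_deriv_right_le_deriv_boundary
    (fun t ht => (hg t ht).continuousWithinAt)
    (fun t ht => (hg t (Ico_subset_Icc_self ht)).mono_of_mem_nhdsWithin (Icc_mem_nhdsGE_of_mem ht))
    (by simp) hB (fun t ht => ?_) (right_mem_Icc.2 hd)
  · simpa [Real.norm_eq_abs] using key
  · have hmv := (convex_Icc a b).norm_image_sub_le_of_norm_hasDerivWithin_le hf'' hM hx
      (hmem t (Ico_subset_Icc_self ht))
    have hrw : f' (x + s * t) * s - s * f' x = s * (f' (x + s * t) - f' x) := by ring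
    rw [hrw, norm_mul, Real.norm_eq_abs s, hs, one_mul]
    simpa [abs_mul, hs, abs_of_nonneg ht.1] using hmv

/-- Landau-type interpolation inequality on a compact interval: if `f` is twice
continuously differentiable on `[a,b]` (with first derivative `f'` and second
derivative `f''`), then for every `0 < d ≤ (b-a)/2`,
`sup |f'| ≤ (2/d) sup |f| + (d/2) sup |f''|` on `[a,b]`. -/
theorem landau_interval (a b d : ℝ) (hab : a < b)
    (f f' f'' : ℝ → ℝ)
    (hf' : ∀ x ∈ Icc a b, HasDerivWithinAt f (f' x) (Icc a b) x)
    (hf'' : ∀ x ∈ Icc a b, HasDerivWithinAt f' (f'' x) (Icc a b) x)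
    (hcont : ContinuousOn f'' (Icc a b))
    (hd : 0 < d) (hd2 : d ≤ (b - a) / 2) :
    (⨆ x : Icc a b, |f' x|) ≤
      (2 / d) * (⨆ x : Icc a b, |f x|) + (d / 2) * (⨆ x : Icc a b, |f'' x|) := by
  have hsup : ∀ g : ℝ → ℝ, ContinuousOn g (Icc a b) →
      ∀ x ∈ Icc a b, |g x| ≤ ⨆ x : Icc a b, |g x| := by
    intro g hg x hx
    have hbdd : BddAbove (range fun y : Icc a b => |g y|) :=
      (isCompact_range (continuousOn_iff_continuous_domRestrict.1 hg).abs).bddAbove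
    exact le_ciSup hbdd ⟨x, hx⟩
  have h0 := hsup f fun x hx => (hf' x hx).continuousWithinAt
  have h2 := hsup f'' hcont
  set A := ⨆ x : Icc a b, |f x|
  set M := ⨆ x : Icc a b, |f'' x|
  have : Nonempty (Icc a b) := ⟨⟨a, left_mem_Icc.2 hab.le⟩⟩
  refine ciSup_le fun ⟨x, hx⟩ => ?_
  obtain ⟨s, hs, hmem⟩ : ∃ s : ℝ, |s| = 1 ∧ ∀ t ∈ Icc 0 d, x + s * t ∈ Icc a b := by
    rcases le_total x ((a + b) / 2) with h | h
    · exact ⟨1, by simp, fun t ht => ⟨by linarith [ht.1, hx.1], by linarith [ht.2]⟩⟩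
    · exact ⟨-1, by simp, fun t ht => ⟨by linarith [ht.2], by linarith [ht.1, hx.2]⟩⟩
  have hT := taylor_bound hf' hf'' h2 hd.le hs hmem
  have hy := h0 _ (hmem d (right_mem_Icc.2 hd.le))
  have hx0 := h0 x hx
  have habs : |s * d * f' x| = d * |f' x| := by
    rw [abs_mul, abs_mul, hs, one_mul, abs_of_pos hd]
  have hmain : d * |f' x| ≤ 2 * A + M * d ^ 2 / 2 := by
    rw [← habs]
    rw [abs_le] at hT hy hx0 ⊢
    constructor <;> linarith [hT.1, hT.2, hy.1, hy.2, hx0.1, hx0.2]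
  have hrhs : 2 / d * A + d / 2 * M = (2 * A + M * d ^ 2 / 2) / d := by
    field_simp
  rw [hrhs, le_div_iff₀ hd]
  linarith
end

section
/- Let α > 0, β > 0 and C₁, C₂ ≥ 0. Let f : ℝ → ℝ be twice continuously differentiable on [1,∞) and suppose |f(t)| ≤ C₁ t^{−α} and |f″(t)| ≤ C₂ t^{−β} for all t ≥ 1. Then there exists a constant K > 0, depending only on α and β, such that |f′(t)| ≤ K·( (C₁C₂)^{1/2} t^{−(α+β)/2} + C₁ t^{−α−1} ) for all t ≥ 2. -/
/-!
Since the bounds for `f` and `f''` decrease in `t`, they may be used with their values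
`A = C₁ t^{-α}` and `B = C₂ t^{-β}` on the whole half-line `[t, ∞)`. Two applications of the mean
value theorem on `[t, t + d]` give `d |f'(t)| ≤ 2 A + B d²` for every step `d > 0`, with no upper
limit on `d`. A quadratic polynomial in `d` that is nonnegative everywhere has nonpositive
discriminant, so `|f'(t)|² ≤ 8 A B` (`sq_deriv_le`); this replaces the optimization over `d` and
covers the degenerate cases `A = 0` and `B = 0`. Hence `K = 3` works, and the term `C₁ t^{-α-1}`
is only discarded.
-/

open Set

/-- Landau's inequality on a half-line, with the nonoptimal constant `8`. -/
lemma sq_deriv_le {f f' f'' : ℝ → ℝ} {t A B : ℝ} (hA : 0 ≤ A) (hB : 0 ≤ B)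
    (hf : ∀ x, t ≤ x → HasDerivWithinAt f (f' x) (Ici t) x)
    (hf' : ∀ x, t ≤ x → HasDerivWithinAt f' (f'' x) (Ici t) x)
    (hfA : ∀ x, t ≤ x → |f x| ≤ A) (hfB : ∀ x, t ≤ x → |f'' x| ≤ B) :
    |f' t| ^ 2 ≤ 8 * A * B := by
  have mvt : ∀ {g g' : ℝ → ℝ}, (∀ x, t ≤ x → HasDerivWithinAt g (g' x) (Ici t) x) →
      ∀ y, t < y → ∃ c ∈ Ioo t y, g y - g t = g' c * (y - t) := by
    intro g g' hg y hy
    obtain ⟨c, hc, h⟩ := exists_hasDerivAt_eq_slope g g' hy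
      (fun x hx => ((hg x hx.1).continuousWithinAt).mono Icc_subset_Ici_self)
      (fun x hx => (hg x hx.1.le).hasDerivAt (Ici_mem_nhds hx.1))
    refine ⟨c, hc, ?_⟩
    rw [h, div_mul_cancel₀]
    exact (sub_pos.2 hy).ne'
  have key : ∀ d : ℝ, 0 ≤ B * (d * d) + (-|f' t|) * d + 2 * A := by
    intro d
    have hx := abs_nonneg (f' t)
    rcases le_or_gt d 0 with hd | hd
    · nlinarith [mul_nonneg hB (mul_self_nonneg d), mul_nonneg hx (neg_nonneg.2 hd)]
    · obtain ⟨c, hc, h1⟩ := mvt hf (t + d) (by linarith)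
      obtain ⟨e, he, h2⟩ := mvt hf' c hc.1
      have hcd : c - t ≤ d := by linarith [hc.2]
      have h3 : |f' c - f' t| ≤ B * d := by
        rw [h2, abs_mul, abs_of_pos (sub_pos.2 hc.1)]
        exact mul_le_mul (hfB e he.1.le) hcd (sub_pos.2 hc.1).le hB
      have h4 : |f' c| * d ≤ 2 * A := by
        have : |f' c| * d = |f (t + d) - f t| := by
          rw [h1, abs_mul, add_sub_cancel_left, abs_of_pos hd]
        rw [this]
        linarith [abs_sub (f (t + d)) (f t), hfA (t + d) (by linarith), hfA t le_rfl]
      have h5 : |f' t| ≤ |f' c| + B * d := by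
        linarith [abs_sub_abs_le_abs_sub (f' t) (f' c), abs_sub_comm (f' t) (f' c)]
      nlinarith [mul_le_mul_of_nonneg_right h5 hd.le]
  have := discrim_le_zero key
  unfold discrim at this
  nlinarith

/-- Interpolation of decay rates: if `f` is twice continuously differentiable on `[1,∞)`
with `|f(t)| ≤ C₁ t^{-α}` and `|f''(t)| ≤ C₂ t^{-β}` for `t ≥ 1`, then there is a
constant `K > 0` depending only on `α, β` such that
`|f'(t)| ≤ K ((C₁C₂)^{1/2} t^{-(α+β)/2} + C₁ t^{-α-1})` for `t ≥ 2`. -/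
theorem interp_decay (α β : ℝ) (hα : 0 < α) (hβ : 0 < β) :
    ∃ K > (0:ℝ), ∀ (C₁ C₂ : ℝ), 0 ≤ C₁ → 0 ≤ C₂ →
      ∀ (f f' f'' : ℝ → ℝ),
        (∀ x ∈ Ici (1:ℝ), HasDerivWithinAt f (f' x) (Ici 1) x) →
        (∀ x ∈ Ici (1:ℝ), HasDerivWithinAt f' (f'' x) (Ici 1) x) →
        ContinuousOn f'' (Ici 1) →
        (∀ t : ℝ, 1 ≤ t → |f t| ≤ C₁ * t ^ (-α)) →
        (∀ t : ℝ, 1 ≤ t → |f'' t| ≤ C₂ * t ^ (-β)) →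
        ∀ t : ℝ, 2 ≤ t →
          |f' t| ≤ K * ((C₁ * C₂) ^ ((1:ℝ)/2) * t ^ (-(α + β) / 2) + C₁ * t ^ (-α - 1)) := by
  refine ⟨3, by norm_num, ?_⟩
  intro C₁ C₂ h₁ h₂ f f' f'' hf hf' _ hfA hfB t ht
  have ht0 : 0 < t := by linarith
  have hsub : Ici t ⊆ Ici (1 : ℝ) := Ici_subset_Ici.2 (by linarith)
  have hdecay : ∀ {γ : ℝ}, 0 < γ → ∀ x, t ≤ x → x ^ (-γ) ≤ t ^ (-γ) := fun hγ x hx =>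
    Real.rpow_le_rpow_of_nonpos ht0 hx (by linarith)
  have hsq : |f' t| ^ 2 ≤ 8 * (C₁ * t ^ (-α)) * (C₂ * t ^ (-β)) :=
    sq_deriv_le (by positivity) (by positivity)
      (fun x hx => (hf x (hsub hx)).mono hsub) (fun x hx => (hf' x (hsub hx)).mono hsub)
      (fun x hx => (hfA x (hsub hx)).trans (mul_le_mul_of_nonneg_left (hdecay hα x hx) h₁))
      (fun x hx => (hfB x (hsub hx)).trans (mul_le_mul_of_nonneg_left (hdecay hβ x hx) h₂))
  set Y := (C₁ * C₂) ^ ((1:ℝ)/2) * t ^ (-(α + β) / 2) with hY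
  have hY0 : 0 ≤ Y := by positivity
  have hY2 : Y ^ 2 = (C₁ * t ^ (-α)) * (C₂ * t ^ (-β)) := by
    have e1 : ((C₁ * C₂) ^ ((1:ℝ)/2)) ^ 2 = C₁ * C₂ := by
      rw [← Real.sqrt_eq_rpow, Real.sq_sqrt (by positivity)]
    have e2 : (t ^ (-(α + β) / 2)) ^ 2 = t ^ (-α) * t ^ (-β) := by
      rw [sq, ← Real.rpow_add ht0, ← Real.rpow_add ht0]
      congr 1
      ring
    rw [hY, mul_pow, e1, e2]
    ring
  have h3 : |f' t| ≤ 3 * Y := by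
    refine (sq_le_sq₀ (abs_nonneg _) (by positivity)).1 ?_
    nlinarith [sq_nonneg Y]
  have : 0 ≤ C₁ * t ^ (-α - 1) := by positivity
  linarith
end

section
/- Let χ : ℝ → ℝ be twice continuously differentiable and let φ : ℝ × ℝ³ → ℝ be twice continuously differentiable. Then at every point (t,x) with x ≠ 0, □( χ(t−|x|)·φ )(t,x) = χ(t−|x|)·(□φ)(t,x) − 2 χ′(t−|x|)·|x|^{−1}·[ ∂_t(|x|φ)(t,x) + Σ_{i=1}^{3} (x_i/|x|) ∂_{x_i}( |x| φ(t,x) ) ]. -/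
/-!
For `x ≠ 0` the function `s(t,x) = t - |x|` is smooth near `(t,x)`, so the second derivative of
`χ(s) φ` in each coordinate direction `v` is given by the Leibniz and chain rules
(`dirDeriv_mul_two`, `dirDeriv_comp_two`):
`∂ᵥ²(χ(s)φ) = χ(s) ∂ᵥ²φ + 2 χ'(s) ∂ᵥs ∂ᵥφ + (χ''(s) (∂ᵥs)² + χ'(s) ∂ᵥ²s) φ`.
In the signed sum over directions the `χ''` terms cancel by the eikonal equation
`-(∂ₜs)² + |∇s|² = 0`, and `□s = -Δ|x| = -2/|x|` in dimension three. What is left is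
`-2 χ'(s) (∂ₜφ + ∂ᵣφ + φ/|x|)`, which is `-2 χ'(s) |x|⁻¹ (∂ₜ + ∂ᵣ)(|x|φ)`.
-/


noncomputable section

/-- Spacetime `ℝ × ℝ³`, with `ℝ³` carrying the Euclidean norm. -/
abbrev Spc : Type := ℝ × EuclideanSpace ℝ (Fin 3)

/-- The partial derivative `∂_t` of a function on `ℝ × ℝ³`. -/
def dt (φ : Spc → ℝ) (p : Spc) : ℝ := fderiv ℝ φ p (1, 0)

/-- The partial derivative `∂_{x_i}` of a function on `ℝ × ℝ³`. -/
def dx (i : Fin 3) (φ : Spc → ℝ) (p : Spc) : ℝ :=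
  fderiv ℝ φ p (0, EuclideanSpace.single i 1)

/-- The Minkowski d'Alembertian `□φ = -∂²_t φ + Σᵢ ∂²_{x_i} φ`. -/
def dalembert (φ : Spc → ℝ) (p : Spc) : ℝ :=
  - dt (dt φ) p + ∑ i : Fin 3, dx i (dx i φ) p

/-- The derivative of `f` in the fixed direction `v`; `dt` and `dx i` are the cases where `v` is a
coordinate vector. -/
def dirDeriv (v : Spc) (f : Spc → ℝ) (p : Spc) : ℝ := fderiv ℝ f p v

lemma dirDeriv_mul (v : Spc) {f g : Spc → ℝ} {p : Spc} (hf : DifferentiableAt ℝ f p)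
    (hg : DifferentiableAt ℝ g p) :
    dirDeriv v (fun q => f q * g q) p = f p * dirDeriv v g p + g p * dirDeriv v f p := by
  simp [dirDeriv, fderiv_fun_mul hf hg]

lemma dirDeriv_comp (v : Spc) {h : ℝ → ℝ} {s : Spc → ℝ} {p : Spc}
    (hh : DifferentiableAt ℝ h (s p)) (hs : DifferentiableAt ℝ s p) :
    dirDeriv v (fun q => h (s q)) p = deriv h (s p) * dirDeriv v s p := by
  have := (hh.hasDerivAt.comp_hasFDerivAt p hs.hasFDerivAt).fderiv
  simp only [Function.comp_def] at this
  simp [dirDeriv, this]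

lemma dirDeriv_congr (v : Spc) {f g : Spc → ℝ} {p : Spc} (h : f =ᶠ[nhds p] g) :
    dirDeriv v f p = dirDeriv v g p := by
  simp [dirDeriv, h.fderiv_eq]

lemma eventually_differentiableAt {f : Spc → ℝ} {p : Spc} (hf : ContDiffAt ℝ 2 f p) :
    ∀ᶠ q in nhds p, DifferentiableAt ℝ f q := by
  filter_upwards [hf.eventually (by simp)] with q hq
  exact hq.differentiableAt (by simp)

lemma differentiableAt_dirDeriv (v : Spc) {f : Spc → ℝ} {p : Spc} (hf : ContDiffAt ℝ 2 f p) :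
    DifferentiableAt ℝ (dirDeriv v f) p := by
  have h1 : ContDiffAt ℝ 1 (fderiv ℝ f) p := hf.fderiv_right (by norm_num)
  exact (h1.differentiableAt (by simp)).clm_apply (differentiableAt_const v)

lemma dirDeriv_mul_two (v : Spc) {f g : Spc → ℝ} {p : Spc} (hf : ContDiffAt ℝ 2 f p)
    (hg : ContDiffAt ℝ 2 g p) :
    dirDeriv v (dirDeriv v (fun q => f q * g q)) p =
      f p * dirDeriv v (dirDeriv v g) p + 2 * dirDeriv v f p * dirDeriv v g p
        + g p * dirDeriv v (dirDeriv v f) p := by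
  have e : dirDeriv v (fun q => f q * g q) =ᶠ[nhds p]
      fun q => f q * dirDeriv v g q + g q * dirDeriv v f q := by
    filter_upwards [eventually_differentiableAt hf, eventually_differentiableAt hg] with q h1 h2
    exact dirDeriv_mul v h1 h2
  have hf0 := hf.differentiableAt (by simp)
  have hg0 := hg.differentiableAt (by simp)
  have hf1 := differentiableAt_dirDeriv v hf
  have hg1 := differentiableAt_dirDeriv v hg
  have hadd : dirDeriv v (fun q => f q * dirDeriv v g q + g q * dirDeriv v f q) p =
      dirDeriv v (fun q => f q * dirDeriv v g q) p
        + dirDeriv v (fun q => g q * dirDeriv v f q) p := by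
    simp only [dirDeriv] at hf1 hg1 ⊢
    exact congrArg (fun L => L v) (fderiv_fun_add (hf0.fun_mul hg1) (hg0.fun_mul hf1))
  rw [dirDeriv_congr v e, hadd, dirDeriv_mul v hf0 hg1, dirDeriv_mul v hg0 hf1]
  ring

lemma dirDeriv_comp_two (v : Spc) {h : ℝ → ℝ} {s : Spc → ℝ} {p : Spc} (hh : ContDiff ℝ 2 h)
    (hs : ContDiffAt ℝ 2 s p) :
    dirDeriv v (dirDeriv v (fun q => h (s q))) p =
      deriv (deriv h) (s p) * dirDeriv v s p ^ 2
        + deriv h (s p) * dirDeriv v (dirDeriv v s) p := by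
  have e : dirDeriv v (fun q => h (s q)) =ᶠ[nhds p]
      fun q => deriv h (s q) * dirDeriv v s q := by
    filter_upwards [eventually_differentiableAt hs] with q h1
    exact dirDeriv_comp v (hh.differentiable (by simp) _) h1
  have hs0 := hs.differentiableAt (by simp)
  have hs1 := differentiableAt_dirDeriv v hs
  have hh1 : Differentiable ℝ (deriv h) :=
    (ContDiff.deriv' (n := 1) (by simpa [one_add_one_eq_two] using hh)).differentiable (by simp)
  rw [dirDeriv_congr v e, dirDeriv_mul v (f := fun q => deriv h (s q)) ((hh1 _).comp p hs0) hs1,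
    dirDeriv_comp v (hh1 _) hs0]
  ring

lemma hasFDerivAt_norm_snd {p : Spc} (hp : p.2 ≠ 0) :
    HasFDerivAt (fun q : Spc => ‖q.2‖)
      ((‖p.2‖⁻¹ • innerSL ℝ p.2).comp (ContinuousLinearMap.snd ℝ ℝ (EuclideanSpace ℝ (Fin 3)))) p := by
  have h1 : HasFDerivAt (fun y : EuclideanSpace ℝ (Fin 3) => Real.sqrt (‖y‖ ^ 2))
      (‖p.2‖⁻¹ • innerSL ℝ p.2) p.2 := by
    have h2 := (hasStrictFDerivAt_norm_sq p.2).hasFDerivAt.sqrt (by positivity)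
    rw [Real.sqrt_sq (norm_nonneg _)] at h2
    refine h2.congr_fderiv (ContinuousLinearMap.ext fun y => ?_)
    simp
    ring
  simp only [Real.sqrt_sq (norm_nonneg _)] at h1
  exact h1.comp p hasFDerivAt_snd

lemma dirDeriv_norm_snd (v : Spc) {p : Spc} (hp : p.2 ≠ 0) :
    dirDeriv v (fun q : Spc => ‖q.2‖) p = ‖p.2‖⁻¹ * inner ℝ p.2 v.2 := by
  simp [dirDeriv, (hasFDerivAt_norm_snd hp).fderiv]

lemma dirDeriv_sub_norm (v : Spc) {p : Spc} (hp : p.2 ≠ 0) :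
    dirDeriv v (fun q : Spc => q.1 - ‖q.2‖) p = v.1 - ‖p.2‖⁻¹ * inner ℝ p.2 v.2 := by
  have := (hasFDerivAt_fst (𝕜 := ℝ) (p := p)).fun_sub (hasFDerivAt_norm_snd hp)
  simp [dirDeriv, this.fderiv]

/-- The second derivative of `t - |x|` comes from the Hessian `|x|⁻¹ (I - x xᵀ / |x|²)` of `|x|`. -/
lemma dirDeriv_sub_norm_two (v : Spc) {p : Spc} (hp : p.2 ≠ 0) :
    dirDeriv v (dirDeriv v (fun q : Spc => q.1 - ‖q.2‖)) p =
      -(‖p.2‖⁻¹ * ‖v.2‖ ^ 2 - ‖p.2‖⁻¹ ^ 3 * inner ℝ p.2 v.2 ^ 2) := by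
  have hev : ∀ᶠ q : Spc in nhds p, q.2 ≠ 0 := continuous_snd.continuousAt.eventually_ne hp
  have e : dirDeriv v (fun q : Spc => q.1 - ‖q.2‖) =ᶠ[nhds p]
      fun q => v.1 - ‖q.2‖⁻¹ * inner ℝ q.2 v.2 := by
    filter_upwards [hev] with q hq
    exact dirDeriv_sub_norm v hq
  have hinv := (hasDerivAt_inv (norm_ne_zero_iff.2 hp)).comp_hasFDerivAt p (hasFDerivAt_norm_snd hp)
  have hin : HasFDerivAt (fun q : Spc => inner ℝ q.2 v.2)
      ((innerSL ℝ v.2).comp (ContinuousLinearMap.snd ℝ ℝ (EuclideanSpace ℝ (Fin 3)))) p := by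
    have := ((innerSL ℝ v.2).comp
      (ContinuousLinearMap.snd ℝ ℝ (EuclideanSpace ℝ (Fin 3)))).hasFDerivAt (x := p)
    refine this.congr_of_eventuallyEq (.of_forall fun q => ?_)
    simp [real_inner_comm]
  have h := (hinv.fun_mul hin).const_sub v.1
  simp only [Function.comp_def] at h
  rw [dirDeriv_congr v e, dirDeriv, h.fderiv]
  simp
  ring

/-- Leibniz and chain rules combined for the cutoff `χ(t - |x|)`. -/
lemma dirDeriv_cutoff_two (v : Spc) {χ : ℝ → ℝ} (hχ : ContDiff ℝ 2 χ) {φ : Spc → ℝ}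
    (hφ : ContDiff ℝ 2 φ) {p : Spc} (hp : p.2 ≠ 0) :
    dirDeriv v (dirDeriv v (fun q => χ (q.1 - ‖q.2‖) * φ q)) p =
      χ (p.1 - ‖p.2‖) * dirDeriv v (dirDeriv v φ) p
      + 2 * (deriv χ (p.1 - ‖p.2‖) * (v.1 - ‖p.2‖⁻¹ * inner ℝ p.2 v.2)) * dirDeriv v φ p
      + φ p * (deriv (deriv χ) (p.1 - ‖p.2‖) * (v.1 - ‖p.2‖⁻¹ * inner ℝ p.2 v.2) ^ 2
        + deriv χ (p.1 - ‖p.2‖) *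
          -(‖p.2‖⁻¹ * ‖v.2‖ ^ 2 - ‖p.2‖⁻¹ ^ 3 * inner ℝ p.2 v.2 ^ 2)) := by
  have hs : ContDiffAt ℝ 2 (fun q : Spc => q.1 - ‖q.2‖) p :=
    contDiffAt_fst.sub (contDiffAt_snd.norm ℝ hp)
  have hc : ContDiffAt ℝ 2 (fun q : Spc => χ (q.1 - ‖q.2‖)) p := hχ.contDiffAt.comp p hs
  rw [dirDeriv_mul_two v hc hφ.contDiffAt, dirDeriv_comp_two v hχ hs,
    dirDeriv_comp v (hχ.differentiable (by simp) _) (hs.differentiableAt (by simp)),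
    dirDeriv_sub_norm v hp, dirDeriv_sub_norm_two v hp]

lemma dt_eq_dirDeriv : dt = dirDeriv (1, 0) := rfl

lemma dx_eq_dirDeriv (i : Fin 3) : dx i = dirDeriv (0, EuclideanSpace.single i 1) := rfl

/-- Commutation of the d'Alembertian with a cutoff in `t - |x|`:
`□(χ(t-|x|) φ) = χ(t-|x|) □φ - 2 χ'(t-|x|) |x|⁻¹ (∂_t + ∂_r)(|x| φ)` for `x ≠ 0`. -/
theorem dalembert_cutoff (χ : ℝ → ℝ) (hχ : ContDiff ℝ 2 χ)
    (φ : Spc → ℝ) (hφ : ContDiff ℝ 2 φ)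
    (t : ℝ) (x : EuclideanSpace ℝ (Fin 3)) (hx : x ≠ 0) :
    dalembert (fun p => χ (p.1 - ‖p.2‖) * φ p) (t, x) =
      χ (t - ‖x‖) * dalembert φ (t, x)
        - 2 * deriv χ (t - ‖x‖) * ‖x‖⁻¹ *
          (dt (fun p => ‖p.2‖ * φ p) (t, x)
            + ∑ i : Fin 3, (x i / ‖x‖) * dx i (fun p => ‖p.2‖ * φ p) (t, x)) := by
  have hr : ‖x‖ ≠ 0 := norm_ne_zero_iff.2 hx
  have hp : ((t, x) : Spc).2 ≠ 0 := hx
  have hsq : x 0 ^ 2 + x 1 ^ 2 + x 2 ^ 2 = ‖x‖ ^ 2 := by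
    rw [EuclideanSpace.real_norm_sq_eq, Fin.sum_univ_three]
  have hn : DifferentiableAt ℝ (fun q : Spc => ‖q.2‖) (t, x) :=
    (hasFDerivAt_norm_snd hp).differentiableAt
  have hd : DifferentiableAt ℝ φ (t, x) := hφ.differentiable (by simp) _
  simp only [dalembert, dt_eq_dirDeriv, dx_eq_dirDeriv, dirDeriv_cutoff_two _ hχ hφ hp,
    dirDeriv_mul _ hn hd, dirDeriv_norm_snd _ hp, Fin.sum_univ_three]
  simp only [inner_zero_right, EuclideanSpace.inner_single_right, PiLp.norm_single,
    norm_zero, norm_one, conj_trivial]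
  -- The two inputs of the final identity: the eikonal equation `|∇|x||² = 1` and `|x|⁻¹ |x| = 1`.
  have h1 : ‖x‖⁻¹ ^ 2 * (x 0 ^ 2 + x 1 ^ 2 + x 2 ^ 2) = 1 := by
    rw [hsq]
    field_simp
  have h2 : ‖x‖⁻¹ * ‖x‖ = 1 := inv_mul_cancel₀ hr
  linear_combination
    (φ (t, x) * deriv (deriv χ) (t - ‖x‖) + 3 * φ (t, x) * deriv χ (t - ‖x‖) * ‖x‖⁻¹) * h1
    + 2 * deriv χ (t - ‖x‖) * (dirDeriv (1, 0) φ (t, x)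
      + ‖x‖⁻¹ * (x 0 * dirDeriv (0, EuclideanSpace.single 0 1) φ (t, x)
        + x 1 * dirDeriv (0, EuclideanSpace.single 1 1) φ (t, x)
        + x 2 * dirDeriv (0, EuclideanSpace.single 2 1) φ (t, x))) * h2
end
end

section
/- Let w : ℝ × (0,∞) → ℝ be smooth and satisfy the ℓ = 2 radial wave equation ∂²_t w(t,r) = ∂²_r w(t,r) + (2/r) ∂_r w(t,r) − (6/r²) w(t,r) for all (t,r) ∈ ℝ × (0,∞). Then (∂_t − ∂_r)[ r^{−4} (∂_t + ∂_r)( r² (∂_t + ∂_r)( r² (∂_t + ∂_r)( r·w ) ) ) ](t,r) = 0 for all (t,r) ∈ ℝ × (0,∞). -/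
/-!
Write `L = ∂_t + ∂_r` and `M = ∂_t - ∂_r`, so that `L r = 1`, `M r = -1` and `L`, `M` commute on
smooth functions. For `ψ = r w` the wave equation reads `M L ψ = -6 ψ / r²`. With `A = r² L ψ` and
`B = r² L A`, the Leibniz rule and commutation give in turn

* `M A = -2 A / r - 6 ψ`,
* `M B = -4 B / r - 4 A`,
* `M L B = L M B = -4 L B / r`,

and the last identity says exactly that `M (r⁻⁴ L B) = 0`. Everything happens on the open half-plane
`r > 0`, where `L` and `M` are the directional derivatives along `(1, 1)` and `(1, -1)`
(`Dplus_eq`, `Dminus_eq`) and commute by symmetry of the second derivative (`Dminus_Dplus_comm`).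
-/

noncomputable section

/-- Partial derivative in the first variable `t` of a function of `(t, r)`. -/
def Dt (f : ℝ → ℝ → ℝ) (t r : ℝ) : ℝ := deriv (fun s => f s r) t

/-- Partial derivative in the second variable `r` of a function of `(t, r)`. -/
def Dr (f : ℝ → ℝ → ℝ) (t r : ℝ) : ℝ := deriv (f t) r

/-- The operator `∂_t + ∂_r`. -/
def Dplus (f : ℝ → ℝ → ℝ) : ℝ → ℝ → ℝ := fun t r => Dt f t r + Dr f t r

/-- The operator `∂_t - ∂_r`. -/
def Dminus (f : ℝ → ℝ → ℝ) : ℝ → ℝ → ℝ := fun t r => Dt f t r - Dr f t r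

open Set Filter Topology

/-- Smoothness of a function of `(t, r)` on the open half-plane `r > 0`. -/
def SmoothHP (f : ℝ → ℝ → ℝ) : Prop :=
  ContDiffOn ℝ (⊤ : ℕ∞) (fun p : ℝ × ℝ => f p.1 p.2) (univ ×ˢ Ioi 0)

lemma isOpen_halfPlane : IsOpen ((univ : Set ℝ) ×ˢ Ioi (0:ℝ)) := isOpen_univ.prod isOpen_Ioi

lemma SmoothHP.contDiffAt {f : ℝ → ℝ → ℝ} (hf : SmoothHP f) (t : ℝ) {r : ℝ} (hr : 0 < r) :
    ContDiffAt ℝ (⊤ : ℕ∞) (fun p : ℝ × ℝ => f p.1 p.2) (t, r) :=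
  ContDiffOn.contDiffAt hf (isOpen_halfPlane.mem_nhds ⟨mem_univ _, hr⟩)

lemma SmoothHP.differentiableAt {f : ℝ → ℝ → ℝ} (hf : SmoothHP f) (t : ℝ) {r : ℝ} (hr : 0 < r) :
    DifferentiableAt ℝ (fun p : ℝ × ℝ => f p.1 p.2) (t, r) :=
  (hf.contDiffAt t hr).differentiableAt (by simp)

lemma SmoothHP.hasDerivAt_t {f : ℝ → ℝ → ℝ} (hf : SmoothHP f) (t : ℝ) {r : ℝ} (hr : 0 < r) :
    HasDerivAt (fun s => f s r) (fderiv ℝ (fun p : ℝ × ℝ => f p.1 p.2) (t, r) (1, 0)) t :=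
  HasFDerivAt.comp_hasDerivAt (f := fun s : ℝ => (s, r)) t
    (hf.differentiableAt t hr).hasFDerivAt ((hasDerivAt_id t).prodMk (hasDerivAt_const t r))

lemma SmoothHP.hasDerivAt_r {f : ℝ → ℝ → ℝ} (hf : SmoothHP f) (t : ℝ) {r : ℝ} (hr : 0 < r) :
    HasDerivAt (f t) (fderiv ℝ (fun p : ℝ × ℝ => f p.1 p.2) (t, r) (0, 1)) r :=
  HasFDerivAt.comp_hasDerivAt (f := fun s : ℝ => (t, s)) r
    (hf.differentiableAt t hr).hasFDerivAt ((hasDerivAt_const r t).prodMk (hasDerivAt_id r))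

lemma Dt_eq {f : ℝ → ℝ → ℝ} (hf : SmoothHP f) (t : ℝ) {r : ℝ} (hr : 0 < r) :
    Dt f t r = fderiv ℝ (fun p : ℝ × ℝ => f p.1 p.2) (t, r) (1, 0) :=
  (hf.hasDerivAt_t t hr).deriv

lemma Dr_eq {f : ℝ → ℝ → ℝ} (hf : SmoothHP f) (t : ℝ) {r : ℝ} (hr : 0 < r) :
    Dr f t r = fderiv ℝ (fun p : ℝ × ℝ => f p.1 p.2) (t, r) (0, 1) :=
  (hf.hasDerivAt_r t hr).deriv

lemma Dplus_eq {f : ℝ → ℝ → ℝ} (hf : SmoothHP f) (t : ℝ) {r : ℝ} (hr : 0 < r) :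
    Dplus f t r = fderiv ℝ (fun p : ℝ × ℝ => f p.1 p.2) (t, r) (1, 1) := by
  rw [Dplus, Dt_eq hf t hr, Dr_eq hf t hr, ← map_add]
  simp

lemma Dminus_eq {f : ℝ → ℝ → ℝ} (hf : SmoothHP f) (t : ℝ) {r : ℝ} (hr : 0 < r) :
    Dminus f t r = fderiv ℝ (fun p : ℝ × ℝ => f p.1 p.2) (t, r) (1, -1) := by
  rw [Dminus, Dt_eq hf t hr, Dr_eq hf t hr, ← map_sub]
  simp

lemma SmoothHP.fderiv_apply {f : ℝ → ℝ → ℝ} (hf : SmoothHP f) (v : ℝ × ℝ) :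
    SmoothHP (fun t r => fderiv ℝ (fun p : ℝ × ℝ => f p.1 p.2) (t, r) v) :=
  (ContDiffOn.fderiv_of_isOpen (m := (⊤ : ℕ∞)) hf isOpen_halfPlane (by simp)).clm_apply
    contDiffOn_const

lemma SmoothHP.congr {f g : ℝ → ℝ → ℝ} (hf : SmoothHP f)
    (h : ∀ t : ℝ, ∀ r > (0:ℝ), g t r = f t r) : SmoothHP g :=
  ContDiffOn.congr hf fun p hp => h p.1 p.2 hp.2

lemma SmoothHP.Dt {f : ℝ → ℝ → ℝ} (hf : SmoothHP f) : SmoothHP (Dt f) :=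
  (hf.fderiv_apply (1, 0)).congr fun t _ hr => Dt_eq hf t hr

lemma SmoothHP.Dr {f : ℝ → ℝ → ℝ} (hf : SmoothHP f) : SmoothHP (Dr f) :=
  (hf.fderiv_apply (0, 1)).congr fun t _ hr => Dr_eq hf t hr

lemma SmoothHP.Dplus {f : ℝ → ℝ → ℝ} (hf : SmoothHP f) : SmoothHP (Dplus f) :=
  (hf.fderiv_apply (1, 1)).congr fun t _ hr => Dplus_eq hf t hr

lemma SmoothHP.Dminus {f : ℝ → ℝ → ℝ} (hf : SmoothHP f) : SmoothHP (Dminus f) :=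
  (hf.fderiv_apply (1, -1)).congr fun t _ hr => Dminus_eq hf t hr

lemma SmoothHP.pow_mul {f : ℝ → ℝ → ℝ} (hf : SmoothHP f) (n : ℕ) :
    SmoothHP (fun t r => r ^ n * f t r) :=
  (contDiff_snd.pow n).contDiffOn.mul hf

lemma Dt_congr {f g : ℝ → ℝ → ℝ} (h : ∀ t : ℝ, ∀ r > (0:ℝ), f t r = g t r) (t : ℝ) {r : ℝ}
    (hr : 0 < r) : Dt f t r = Dt g t r := by
  simp only [Dt, h _ r hr]

lemma Dr_congr {f g : ℝ → ℝ → ℝ} (h : ∀ t : ℝ, ∀ r > (0:ℝ), f t r = g t r) (t : ℝ) {r : ℝ}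
    (hr : 0 < r) : Dr f t r = Dr g t r :=
  Filter.EventuallyEq.deriv_eq (by filter_upwards [Ioi_mem_nhds hr] with s hs using h t s hs)

lemma Dplus_congr {f g : ℝ → ℝ → ℝ} (h : ∀ t : ℝ, ∀ r > (0:ℝ), f t r = g t r) (t : ℝ) {r : ℝ}
    (hr : 0 < r) : Dplus f t r = Dplus g t r := by
  rw [Dplus, Dplus, Dt_congr h t hr, Dr_congr h t hr]

lemma Dminus_congr {f g : ℝ → ℝ → ℝ} (h : ∀ t : ℝ, ∀ r > (0:ℝ), f t r = g t r) (t : ℝ) {r : ℝ}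
    (hr : 0 < r) : Dminus f t r = Dminus g t r := by
  rw [Dminus, Dminus, Dt_congr h t hr, Dr_congr h t hr]

lemma Dt_mul {f : ℝ → ℝ → ℝ} (hf : SmoothHP f) (g : ℝ → ℝ) (t : ℝ) {r : ℝ} (hr : 0 < r) :
    Dt (fun t r => g r * f t r) t r = g r * Dt f t r := by
  rw [Dt_eq hf t hr]
  exact ((hf.hasDerivAt_t t hr).const_mul (g r)).deriv

lemma Dr_mul {f : ℝ → ℝ → ℝ} (hf : SmoothHP f) {g : ℝ → ℝ} {g' : ℝ} (t : ℝ) {r : ℝ} (hr : 0 < r)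
    (hg : HasDerivAt g g' r) :
    Dr (fun t r => g r * f t r) t r = g' * f t r + g r * Dr f t r := by
  rw [Dr_eq hf t hr]
  exact (hg.mul (hf.hasDerivAt_r t hr)).deriv

lemma Dplus_mul {f : ℝ → ℝ → ℝ} (hf : SmoothHP f) {g : ℝ → ℝ} {g' : ℝ} (t : ℝ) {r : ℝ}
    (hr : 0 < r) (hg : HasDerivAt g g' r) :
    Dplus (fun t r => g r * f t r) t r = g' * f t r + g r * Dplus f t r := by
  rw [Dplus, Dt_mul hf g t hr, Dr_mul hf t hr hg, Dplus]
  ring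

lemma Dminus_mul {f : ℝ → ℝ → ℝ} (hf : SmoothHP f) {g : ℝ → ℝ} {g' : ℝ} (t : ℝ) {r : ℝ}
    (hr : 0 < r) (hg : HasDerivAt g g' r) :
    Dminus (fun t r => g r * f t r) t r = -g' * f t r + g r * Dminus f t r := by
  rw [Dminus, Dt_mul hf g t hr, Dr_mul hf t hr hg, Dminus]
  ring

lemma SmoothHP.mul_left {f : ℝ → ℝ → ℝ} (hf : SmoothHP f) {g : ℝ → ℝ}
    (hg : ContDiffOn ℝ (⊤ : ℕ∞) g (Ioi 0)) : SmoothHP (fun t r => g r * f t r) :=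
  (hg.comp contDiff_snd.contDiffOn fun _ hp => hp.2).mul hf

lemma Dplus_add {f g : ℝ → ℝ → ℝ} (hf : SmoothHP f) (hg : SmoothHP g) (t : ℝ) {r : ℝ}
    (hr : 0 < r) : Dplus (fun t r => f t r + g t r) t r = Dplus f t r + Dplus g t r := by
  have h1 : Dt (fun t r => f t r + g t r) t r = Dt f t r + Dt g t r := by
    rw [Dt_eq hf t hr, Dt_eq hg t hr]
    exact ((hf.hasDerivAt_t t hr).add (hg.hasDerivAt_t t hr)).deriv
  have h2 : Dr (fun t r => f t r + g t r) t r = Dr f t r + Dr g t r := by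
    rw [Dr_eq hf t hr, Dr_eq hg t hr]
    exact ((hf.hasDerivAt_r t hr).add (hg.hasDerivAt_r t hr)).deriv
  simp only [Dplus, h1, h2]
  ring

lemma fderiv_fderiv_comm {f : ℝ → ℝ → ℝ} (hf : SmoothHP f) (t : ℝ) {r : ℝ} (hr : 0 < r)
    (u v : ℝ × ℝ) :
    fderiv ℝ (fun p : ℝ × ℝ => fderiv ℝ (fun p : ℝ × ℝ => f p.1 p.2) (p.1, p.2) v) (t, r) u =
    fderiv ℝ (fun p : ℝ × ℝ => fderiv ℝ (fun p : ℝ × ℝ => f p.1 p.2) (p.1, p.2) u) (t, r) v := by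
  have hd : DifferentiableAt ℝ (fderiv ℝ (fun p : ℝ × ℝ => f p.1 p.2)) (t, r) :=
    ((hf.contDiffAt t hr).fderiv_right (m := 1) (by norm_cast)).differentiableAt (by simp)
  have key : ∀ a b : ℝ × ℝ,
      fderiv ℝ (fun p : ℝ × ℝ => fderiv ℝ (fun p : ℝ × ℝ => f p.1 p.2) (p.1, p.2) a) (t, r) b =
      fderiv ℝ (fderiv ℝ (fun p : ℝ × ℝ => f p.1 p.2)) (t, r) b a := fun a b => by
    simp only [Prod.mk.eta]
    rw [fderiv_clm_apply hd (differentiableAt_const a)]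
    simp
  rw [key, key]
  exact ((hf.contDiffAt t hr).isSymmSndFDerivAt (by simp; norm_cast)) u v

lemma Dminus_Dplus_comm {f : ℝ → ℝ → ℝ} (hf : SmoothHP f) (t : ℝ) {r : ℝ} (hr : 0 < r) :
    Dminus (Dplus f) t r = Dplus (Dminus f) t r := by
  rw [Dminus_congr (fun t r hr => Dplus_eq hf t hr) t hr,
    Dplus_congr (fun t r hr => Dminus_eq hf t hr) t hr,
    Dminus_eq (hf.fderiv_apply _) t hr, Dplus_eq (hf.fderiv_apply _) t hr]
  exact fderiv_fderiv_comm hf t hr _ _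

/-- The d'Alembertian in null form: the mixed derivatives cancel. -/
lemma Dminus_Dplus_eq {f : ℝ → ℝ → ℝ} (hf : SmoothHP f) (t : ℝ) {r : ℝ} (hr : 0 < r) :
    Dminus (Dplus f) t r = Dt (Dt f) t r - Dr (Dr f) t r := by
  have hmix : Dt (Dr f) t r = Dr (Dt f) t r := by
    rw [Dt_congr (fun t r hr => Dr_eq hf t hr) t hr,
      Dr_congr (fun t r hr => Dt_eq hf t hr) t hr,
      Dt_eq (hf.fderiv_apply _) t hr, Dr_eq (hf.fderiv_apply _) t hr]
    exact fderiv_fderiv_comm hf t hr _ _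
  have h1 : Dt (Dplus f) t r = Dt (Dt f) t r + Dt (Dr f) t r := by
    rw [Dt_eq hf.Dt t hr, Dt_eq hf.Dr t hr]
    exact ((hf.Dt.hasDerivAt_t t hr).add (hf.Dr.hasDerivAt_t t hr)).deriv
  have h2 : Dr (Dplus f) t r = Dr (Dt f) t r + Dr (Dr f) t r := by
    rw [Dr_eq hf.Dt t hr, Dr_eq hf.Dr t hr]
    exact ((hf.Dt.hasDerivAt_r t hr).add (hf.Dr.hasDerivAt_r t hr)).deriv
  rw [Dminus, h1, h2, hmix]
  ring

/-- One step of the recursion: if `M L φ = a φ / r² + b L φ / r`, then `F = r² L φ` satisfies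
`M F = (b - 2) F / r + a φ`, and commuting `L` through gives the same type of equation for `F`. -/
lemma null_step {φ : ℝ → ℝ → ℝ} (hφ : SmoothHP φ) (a b : ℝ)
    (h : ∀ t : ℝ, ∀ r > (0:ℝ),
      Dminus (Dplus φ) t r = a * φ t r / r ^ 2 + b * Dplus φ t r / r)
    (t : ℝ) {r : ℝ} (hr : 0 < r) :
    Dminus (Dplus (fun t r => r ^ 2 * Dplus φ t r)) t r =
      (a + 2 - b) * (r ^ 2 * Dplus φ t r) / r ^ 2 +
        (b - 2) * Dplus (fun t r => r ^ 2 * Dplus φ t r) t r / r := by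
  have hF : SmoothHP (fun t r => r ^ 2 * Dplus φ t r) := hφ.Dplus.pow_mul 2
  have hM : ∀ t : ℝ, ∀ r > (0:ℝ), Dminus (fun t r => r ^ 2 * Dplus φ t r) t r =
      (b - 2) * r⁻¹ * (r ^ 2 * Dplus φ t r) + a * φ t r := fun t r hr => by
    rw [Dminus_mul hφ.Dplus (g := fun r => r ^ 2) t hr (hasDerivAt_pow 2 r), h t r hr]
    field_simp
    ring
  have hinv : HasDerivAt (fun r : ℝ => (b - 2) * r⁻¹) ((b - 2) * -(r ^ 2)⁻¹) r :=
    (hasDerivAt_inv hr.ne').const_mul _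
  have hsm : ContDiffOn ℝ (⊤ : ℕ∞) (fun r : ℝ => (b - 2) * r⁻¹) (Ioi 0) :=
    contDiffOn_const.mul (contDiffOn_id.inv fun x hx => ne_of_gt hx)
  have hL : Dplus (fun t r => a * φ t r) t r = a * Dplus φ t r := by
    rw [Dplus_mul hφ (g := fun _ => a) t hr (hasDerivAt_const r a)]
    ring
  rw [Dminus_Dplus_comm hF t hr, Dplus_congr hM t hr,
    Dplus_add (hF.mul_left hsm) (hφ.mul_left contDiffOn_const) t hr, hL,
    Dplus_mul hF (g := fun r => (b - 2) * r⁻¹) t hr hinv]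
  field_simp
  ring

/-- If `w` is smooth on `ℝ × (0,∞)` and satisfies the `ℓ = 2` radial wave equation
`∂²_t w = ∂²_r w + (2/r) ∂_r w - (6/r²) w`, then
`(∂_t - ∂_r)[ r⁻⁴ (∂_t + ∂_r)( r² (∂_t + ∂_r)( r² (∂_t + ∂_r)(r w) ) ) ] = 0`. -/
theorem ell2_conservation (w : ℝ → ℝ → ℝ)
    (hw : ContDiffOn ℝ (⊤ : ℕ∞) (fun p : ℝ × ℝ => w p.1 p.2) (Set.univ ×ˢ Set.Ioi 0))
    (heq : ∀ t : ℝ, ∀ r > (0:ℝ),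
      Dt (Dt w) t r = Dr (Dr w) t r + (2 / r) * Dr w t r - (6 / r ^ 2) * w t r) :
    ∀ t : ℝ, ∀ r > (0:ℝ),
      Dminus (fun t' r' => (r' ^ 4)⁻¹ *
        Dplus (fun t'' r'' => r'' ^ 2 *
          Dplus (fun t₃ r₃ => r₃ ^ 2 *
            Dplus (fun t₄ r₄ => r₄ * w t₄ r₄) t₃ r₃) t'' r'') t' r') t r = 0 := by
  have hw' : SmoothHP w := hw
  have hψ : SmoothHP (fun t r => r * w t r) := hw'.mul_left contDiffOn_id
  have h0 : ∀ t : ℝ, ∀ r > (0:ℝ), Dminus (Dplus (fun t r => r * w t r)) t r =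
      (-6) * (r * w t r) / r ^ 2 + 0 * Dplus (fun t r => r * w t r) t r / r := fun t r hr => by
    have hM : ∀ t : ℝ, ∀ r > (0:ℝ), Dminus (fun t r => r * w t r) t r =
        r * Dminus w t r + (-1) * w t r := fun t r hr => by
      rw [Dminus_mul hw' (g := fun r => r) t hr (hasDerivAt_id r)]
      ring
    rw [Dminus_Dplus_comm hψ t hr, Dplus_congr hM t hr,
      Dplus_add
        (hw'.Dminus.mul_left (g := fun r => r) contDiffOn_id)
        (hw'.mul_left contDiffOn_const) t hr,
      Dplus_mul hw'.Dminus (g := fun r => r) t hr (hasDerivAt_id r),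
      Dplus_mul hw' (g := fun _ => -1) t hr (hasDerivAt_const r (-1)),
      ← Dminus_Dplus_comm hw' t hr, Dminus_Dplus_eq hw' t hr, heq t r hr, Dplus, Dminus]
    field_simp
    ring
  -- The coefficients `(a, b)` run through `(-6, 0)`, `(-4, -2)`, `(0, -4)`.
  have h1 := fun t r (hr : r > (0:ℝ)) => null_step hψ (-6) 0 h0 t hr
  have hA := hψ.Dplus.pow_mul 2
  have h2 := fun t r (hr : r > (0:ℝ)) => null_step hA _ _ h1 t hr
  have hB := hA.Dplus.pow_mul 2
  intro t r hr
  have hinv : HasDerivAt (fun r : ℝ => (r ^ 4)⁻¹) (-(4 * r ^ 3) / (r ^ 4) ^ 2) r := by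
    simpa using (hasDerivAt_pow 4 r).fun_inv (pow_ne_zero 4 hr.ne')
  have h3 := Dminus_mul hB.Dplus (g := fun r => (r ^ 4)⁻¹) t hr hinv
  rw [h2 t r hr] at h3
  refine h3.trans ?_
  field_simp
  ring
end
end

section
/- Let γ < −3/2 and r > 0. Let g : (0, r] → ℝ be continuously differentiable, suppose g(s) → 0 as s → 0⁺, and suppose that s ↦ g′(s)²·s^{2γ+4} is integrable on (0, r). Then g(r)² ≤ (−2γ−3)^{−1} · r^{−2γ−3} · ∫₀^{r} g′(s)² s^{2γ+4} ds. -/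
/-!
With `P s = s ^ (2γ+4)` and `Q s = s ^ (-2γ-4)`, so that `P * Q = 1` on `(0, ∞)`, the pointwise
inequality `0 ≤ Q (g' P - t)² = g'² P - 2 t g' + t² Q` does all the work. It dominates `|g'|`
by `g'² P + Q`, so `g'` is integrable on `(0, r)` and the fundamental theorem of calculus gives
`∫ g' = g r`. Integrating it gives `0 ≤ ∫ g'² P - 2 t g(r) + t² W` for all `t`, where
`W = ∫ Q = r ^ (-2γ-3) / (-2γ-3)` is finite because `γ < -3/2`; the choice `t = g(r) / W` is
the Cauchy–Schwarz bound.
-/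

open Set MeasureTheory

/-- Weighted pointwise bound from the fundamental theorem of calculus and Cauchy–Schwarz:
for `γ < -3/2`, `r > 0`, and `g` continuously differentiable on `(0, r]` with `g(s) → 0`
as `s → 0⁺` and `s ↦ g'(s)² s^{2γ+4}` integrable on `(0, r)`, one has
`g(r)² ≤ (-2γ-3)⁻¹ r^{-2γ-3} ∫₀ʳ g'(s)² s^{2γ+4} ds`. -/
theorem weighted_pointwise_bound (γ r : ℝ) (hγ : γ < -(3/2)) (hr : 0 < r)
    (g g' : ℝ → ℝ)
    (hg : ∀ s ∈ Ioc (0:ℝ) r, HasDerivWithinAt g (g' s) (Ioc 0 r) s)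
    (hg'c : ContinuousOn g' (Ioc 0 r))
    (hlim : Filter.Tendsto g (nhdsWithin 0 (Ioi 0)) (nhds 0))
    (hint : IntegrableOn (fun s => (g' s) ^ 2 * s ^ (2 * γ + 4)) (Ioo 0 r)) :
    (g r) ^ 2 ≤ (-2 * γ - 3)⁻¹ * r ^ (-2 * γ - 3) *
      ∫ s in Ioo (0:ℝ) r, (g' s) ^ 2 * s ^ (2 * γ + 4) := by
  have hk : 0 < -2 * γ - 3 := by linarith
  set P : ℝ → ℝ := fun s => s ^ (2 * γ + 4) with hP
  set Q : ℝ → ℝ := fun s => s ^ (-2 * γ - 4) with hQ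
  have hQpos : ∀ s ∈ Ioo (0:ℝ) r, 0 < Q s := fun s hs => Real.rpow_pos_of_pos hs.1 _
  have hPQ : ∀ s ∈ Ioo (0:ℝ) r, P s * Q s = 1 := by
    intro s hs
    simp only [hP, hQ]
    rw [← Real.rpow_add hs.1]
    ring_nf
    exact Real.rpow_zero s
  have key : ∀ t : ℝ, ∀ s ∈ Ioo (0:ℝ) r,
      0 ≤ g' s ^ 2 * P s - 2 * t * g' s + t ^ 2 * Q s := by
    intro t s hs
    have h := mul_nonneg (hQpos s hs).le (sq_nonneg (g' s * P s - t))
    have e : Q s * (g' s * P s - t) ^ 2 = g' s ^ 2 * P s - 2 * t * g' s + t ^ 2 * Q s := by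
      linear_combination (g' s ^ 2 * P s - 2 * t * g' s) * hPQ s hs
    rwa [e] at h
  have hQint : IntegrableOn Q (Ioo 0 r) := by
    have h : IntervalIntegrable Q volume 0 r :=
      intervalIntegral.intervalIntegrable_rpow' (by linarith)
    rwa [intervalIntegrable_iff_integrableOn_Ioo_of_le hr.le] at h
  have hW : ∫ s in Ioo (0:ℝ) r, Q s = (-2 * γ - 3)⁻¹ * r ^ (-2 * γ - 3) := by
    rw [← integral_Ioc_eq_integral_Ioo, ← intervalIntegral.integral_of_le hr.le]
    simp only [hQ]
    rw [integral_rpow (Or.inl (by linarith)), show -2 * γ - 4 + 1 = -2 * γ - 3 by ring,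
      Real.zero_rpow hk.ne', sub_zero, div_eq_inv_mul]
  have hg'int : IntegrableOn g' (Ioo 0 r) := by
    refine Integrable.mono' (hint.add hQint)
      ((hg'c.mono Ioo_subset_Ioc_self).aestronglyMeasurable measurableSet_Ioo) ?_
    refine (ae_restrict_mem measurableSet_Ioo).mono fun s hs => ?_
    have h1 := key 1 s hs
    have h2 := key (-1) s hs
    have h3 : 0 ≤ g' s ^ 2 * P s + Q s := by linarith
    rw [Real.norm_eq_abs]
    change |g' s| ≤ g' s ^ 2 * P s + Q s
    exact abs_le.2 ⟨by linarith, by linarith⟩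
  have hG : ∫ s in Ioo (0:ℝ) r, g' s = g r := by
    rw [← integral_Ioc_eq_integral_Ioo, ← intervalIntegral.integral_of_le hr.le]
    have h := intervalIntegral.integral_eq_sub_of_hasDerivAt_of_tendsto (f := g) (f' := g')
      (fa := 0) (fb := g r) hr
      (fun s hs => (hg s (Ioo_subset_Ioc_self hs)).hasDerivAt (Ioc_mem_nhds hs.1 hs.2))
      ((intervalIntegrable_iff_integrableOn_Ioo_of_le hr.le).2 hg'int) hlim
      (by
        have hc := (hg r ⟨hr, le_rfl⟩).continuousWithinAt.mono Ioo_subset_Ioc_self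
        rwa [ContinuousWithinAt, nhdsWithin_Ioo_eq_nhdsLT hr] at hc)
    rw [h, sub_zero]
  rw [← hW]
  have hWpos : 0 < ∫ s in Ioo (0:ℝ) r, Q s := by
    rw [hW]; positivity
  set W := ∫ s in Ioo (0:ℝ) r, Q s
  set A := ∫ s in Ioo (0:ℝ) r, g' s ^ 2 * P s with hA
  have hquad : ∀ t : ℝ, 0 ≤ A - 2 * t * g r + t ^ 2 * W := by
    intro t
    have h := setIntegral_nonneg (μ := volume) measurableSet_Ioo (key t)
    have hPint : IntegrableOn (fun s => g' s ^ 2 * P s) (Ioo 0 r) := hint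
    have hsub : IntegrableOn (fun s => g' s ^ 2 * P s - 2 * t * g' s) (Ioo 0 r) :=
      hPint.sub (hg'int.const_mul (2 * t))
    rwa [integral_add hsub (hQint.const_mul (t ^ 2)),
      integral_sub hPint (hg'int.const_mul (2 * t)), integral_const_mul, integral_const_mul,
      hG] at h
  have h := mul_nonneg hWpos.le (hquad (g r / W))
  have e : W * (A - 2 * (g r / W) * g r + (g r / W) ^ 2 * W) = W * A - g r ^ 2 := by
    field_simp
    ring
  linarith
end
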